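/- Let μ ∈ (0, 1), ν > 0 and t ∈ ℝ. Then lim_{n→∞} Σ_{k=0}^{∞} ((e^{t/n^{μ}} − 1)·ν·n^{μ})^{k} / Γ(μk + 1) = Σ_{k=0}^{∞} (νt)^{k} / Γ(μk + 1), where the limit is over n ∈ ℕ. That is, the moment generating function of the scaled fractional Poisson process value N_{μ,ν}(n)/n^{μ}, whose mgf is E(exp(s·N_{μ,ν}(n))) = Σ_{k=0}^{∞} ((e^{s} − 1)·ν·n^{μ})^{k}/Γ(μk+1), converges pointwise to the Mittag-Leffler function E_μ(νt) = Σ_{k=0}^{∞} (νt)^{k}/Γ(μk+1). -/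

import Mathlib

open Filter

lemma gamma_ratio_le (μ s : ℝ) (hμ0 : 0 < μ) (hμ1 : μ < 1) (hs : 0 < s) :
    Real.Gamma s / Real.Gamma (s + μ) ≤ (s + μ) ^ (1 - μ) / s := by
  have hsm : 0 < s + μ := by linarith
  have h := Real.Gamma_mul_add_mul_le_rpow_Gamma_mul_rpow_Gamma (s := s + μ) (t := s + μ + 1)
    (a := μ) (b := 1 - μ) hsm (by linarith) hμ0 (by linarith) (by ring)
  have e : μ * (s + μ) + (1 - μ) * (s + μ + 1) = s + 1 := by ring
  have hG := Real.Gamma_pos_of_pos hsm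
  rw [e, Real.Gamma_add_one hs.ne', Real.Gamma_add_one hsm.ne',
    Real.mul_rpow hsm.le hG.le] at h
  have e2 : Real.Gamma (s + μ) ^ μ * Real.Gamma (s + μ) ^ (1 - μ) = Real.Gamma (s + μ) := by
    rw [← Real.rpow_add hG]; simp
  rw [div_le_div_iff₀ hG hs]
  calc _ = s * Real.Gamma s := by ring
    _ ≤ _ := h
    _ = (s + μ) ^ (1 - μ) * (Real.Gamma (s + μ) ^ μ * Real.Gamma (s + μ) ^ (1 - μ)) := by ring
    _ = _ := by rw [e2]

lemma gamma_arg_pos (μ : ℝ) (hμ0 : 0 < μ) (k : ℕ) : 0 < μ * (k : ℝ) + 1 := by positivity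

lemma ml_summable (μ M : ℝ) (hμ0 : 0 < μ) (hμ1 : μ < 1) (hM : 0 < M) :
    Summable (fun k : ℕ => M ^ k / Real.Gamma (μ * (k : ℝ) + 1)) := by
  have hG := fun k : ℕ => Real.Gamma_pos_of_pos (gamma_arg_pos μ hμ0 k)
  refine summable_of_ratio_test_tendsto_lt_one (l := 0) one_pos
    (Eventually.of_forall fun k => (div_pos (pow_pos hM k) (hG k)).ne') ?_
  have hs : Tendsto (fun k : ℕ => μ * (k : ℝ) + 1) atTop atTop :=
    tendsto_atTop_add_const_right _ _ (tendsto_natCast_atTop_atTop.const_mul_atTop hμ0)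
  have hb : Tendsto (fun k : ℕ => M * 2 ^ (1 - μ) * (μ * (k : ℝ) + 1) ^ (-μ)) atTop (nhds 0) := by
    simpa using ((tendsto_rpow_neg_atTop hμ0).comp hs).const_mul (M * 2 ^ (1 - μ))
  refine squeeze_zero (fun k => by positivity) (fun k => ?_) hb
  have hsk := gamma_arg_pos μ hμ0 k
  have h1 : 1 ≤ μ * (k : ℝ) + 1 := by
    have : 0 ≤ μ * (k : ℝ) := by positivity
    linarith
  have hr := gamma_ratio_le μ _ hμ0 hμ1 hsk
  have e : μ * ((k + 1 : ℕ) : ℝ) + 1 = μ * (k : ℝ) + 1 + μ := by push_cast; ring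
  have hGk := hG k
  have hGk1 := hG (k + 1)
  rw [Real.norm_of_nonneg (by positivity), Real.norm_of_nonneg (by positivity)]
  rw [e] at *
  generalize μ * (k : ℝ) + 1 = s at *
  have h2 : (s + μ) ^ (1 - μ) / s ≤ 2 ^ (1 - μ) * s ^ (-μ) := by
    rw [div_le_iff₀ hsk]
    calc (s + μ) ^ (1 - μ) ≤ (2 * s) ^ (1 - μ) :=
          Real.rpow_le_rpow (by linarith) (by linarith) (by linarith)
      _ = 2 ^ (1 - μ) * s ^ (1 - μ) := Real.mul_rpow (by norm_num) hsk.le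
      _ = 2 ^ (1 - μ) * s ^ (-μ) * s := by
          rw [mul_assoc, ← Real.rpow_add_one hsk.ne']; congr 2; ring
  calc _ = M * (Real.Gamma s / Real.Gamma (s + μ)) := by
        field_simp
        ring
    _ ≤ M * (2 ^ (1 - μ) * s ^ (-μ)) := by gcongr; exact hr.trans h2
    _ = _ := by ring

lemma base_tendsto (μ ν t : ℝ) (hμ0 : 0 < μ) :
    Tendsto (fun n : ℕ => (Real.exp (t / (n : ℝ) ^ μ) - 1) * ν * (n : ℝ) ^ μ) atTop
      (nhds (ν * t)) := by
  have hd : HasDerivAt (fun x : ℝ => Real.exp (t * x)) t 0 := by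
    have := ((hasDerivAt_id (0 : ℝ)).const_mul t).exp
    simpa using this
  have hx : Tendsto (fun n : ℕ => ((n : ℝ) ^ μ)⁻¹) atTop (nhdsWithin 0 {0}ᶜ) := by
    refine tendsto_nhdsWithin_iff.2 ⟨?_, ?_⟩
    · exact ((tendsto_rpow_atTop hμ0).comp tendsto_natCast_atTop_atTop).inv_tendsto_atTop
    · filter_upwards [eventually_gt_atTop 0] with n hn
      have : 0 < (n : ℝ) := by exact_mod_cast hn
      have : ((n : ℝ) ^ μ)⁻¹ ≠ 0 := by positivity
      simpa using this
  have := ((hasDerivAt_iff_tendsto_slope.1 hd).comp hx).const_mul ν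
  refine this.congr fun n => ?_
  simp [slope_def_field, div_eq_mul_inv]
  ring

/-- **Theorem 3.3 (fractional Poisson part).** For `μ ∈ (0,1)`, `ν > 0` and `t ∈ ℝ`,
the moment generating function of the scaled fractional Poisson process value
`N_{μ,ν}(n)/n^μ`, namely `Σ_{k=0}^∞ ((e^{t/n^μ} − 1)·ν·n^μ)^k / Γ(μk+1)`,
converges as `n → ∞` to the Mittag-Leffler function value
`E_μ(νt) = Σ_{k=0}^∞ (νt)^k / Γ(μk+1)`. -/
theorem stmt13 (μ ν t : ℝ) (hμ0 : 0 < μ) (hμ1 : μ < 1) (hν : 0 < ν) :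
    Tendsto
      (fun n : ℕ =>
        ∑' k : ℕ,
          ((Real.exp (t / (n : ℝ) ^ μ) - 1) * ν * (n : ℝ) ^ μ) ^ k /
            Real.Gamma (μ * (k : ℝ) + 1))
      atTop
      (nhds (∑' k : ℕ, (ν * t) ^ k / Real.Gamma (μ * (k : ℝ) + 1))) := by
  have hb := base_tendsto μ ν t hμ0
  refine tendsto_tsum_of_dominated_convergence
    (ml_summable μ (|ν * t| + 1) hμ0 hμ1 (by positivity))
    (fun k => (hb.pow k).div_const _) ?_
  filter_upwards [hb.abs.eventually (gt_mem_nhds (lt_add_one |ν * t|))] with n hn k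
  have hG := Real.Gamma_pos_of_pos (gamma_arg_pos μ hμ0 k)
  rw [norm_div, norm_pow, Real.norm_of_nonneg hG.le, Real.norm_eq_abs]
  gcongr
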